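/- Conversely, if f : 𝕋^d → ℂ has Fourier coefficients satisfying |f̂(k)| ≤ exp(-C^(-1/s)·|k|^(1/s)) for all k ∈ ℤ^d and some C > 0, s ≥ 1, then f is smooth and s-Gevrey: there exists C' > 0 with ‖D^α f‖_∞ ≤ C'^(|α|+1)(α!)^s for all multi-indices α. -/

import Mathlib

open scoped Real

/-- Partial derivative in the `i`-th coordinate direction. -/
noncomputable def pderivDir {d : ℕ} (i : Fin d) (f : (Fin d → ℝ) → ℂ) : (Fin d → ℝ) → ℂ :=
  fun x => fderiv ℝ f x (Pi.single i 1)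

/-- Iterated partial derivative `D^α f` for a multi-index `α`. -/
noncomputable def multiDeriv {d : ℕ} (α : Fin d → ℕ) (f : (Fin d → ℝ) → ℂ) : (Fin d → ℝ) → ℂ :=
  ((List.ofFn fun i : Fin d => (pderivDir i)^[α i]).foldr (· ∘ ·) id) f

namespace GevreyAux

/-- key elementary bound -/
lemma pow_le_gevrey (b s t : ℝ) (hb : 0 < b) (hs : 1 ≤ s) (ht : 0 ≤ t) (n : ℕ) :
    t ^ n ≤ ((s / b) ^ s) ^ n * (n.factorial : ℝ) ^ s * Real.exp (b * t ^ ((1 : ℝ) / s)) := by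
  have hs0 : 0 < s := by linarith
  set w : ℝ := b / s * t ^ ((1 : ℝ) / s) with hw
  have hw0 : 0 ≤ w := by positivity
  have h1 : w ^ n ≤ n.factorial * Real.exp w := by
    have := Real.pow_div_factorial_le_exp w hw0 n
    rw [div_le_iff₀ (by positivity)] at this
    linarith
  have ht' : t = (s / b * w) ^ s := by
    have : s / b * w = t ^ ((1 : ℝ) / s) := by rw [hw]; field_simp
    rw [this, ← Real.rpow_mul ht]; field_simp; simp
  have h2 : t ^ n = ((s / b) ^ s) ^ n * (w ^ n) ^ s := by
    conv_lhs => rw [ht', Real.mul_rpow (by positivity) hw0, mul_pow]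
    rw [← Real.rpow_natCast (w ^ s), ← Real.rpow_mul hw0, mul_comm s, Real.rpow_mul hw0,
      Real.rpow_natCast]
  have h3 : (w ^ n) ^ s ≤ (n.factorial : ℝ) ^ s * Real.exp (b * t ^ ((1 : ℝ) / s)) := by
    have : Real.exp (b * t ^ ((1 : ℝ) / s)) = (Real.exp w) ^ s := by
      rw [← Real.exp_mul, hw]; congr 1; field_simp
    rw [this, ← Real.mul_rpow (by positivity) (by positivity)]
    exact Real.rpow_le_rpow (by positivity) h1 hs0.le
  rw [h2, mul_assoc]
  gcongr

lemma summable_one (b s : ℝ) (hb : 0 < b) (hs : 1 ≤ s) :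
    Summable fun n : ℤ => Real.exp (-b * ‖n‖ ^ ((1 : ℝ) / s)) := by
  obtain ⟨M, hM⟩ : ∃ M : ℝ, M = ((s / b) ^ s) ^ 2 * ((2 : ℕ).factorial : ℝ) ^ s := ⟨_, rfl⟩
  have h1 : Summable fun n : ℤ => M * (1 / (n : ℝ) ^ 2) :=
    (Real.summable_one_div_int_pow.2 (by norm_num)).mul_left M
  refine Summable.of_norm_bounded_eventually h1 ?_
  have : ∀ᶠ n : ℤ in Filter.cofinite, n ≠ 0 :=
    (Set.finite_singleton (0 : ℤ)).eventually_cofinite_notMem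
  filter_upwards [this] with n hn
  have h2 := pow_le_gevrey b s ‖n‖ hb hs (norm_nonneg _) 2
  rw [← hM] at h2
  have hn' : (0 : ℝ) < (n : ℝ) ^ 2 := by positivity
  have h3 : ‖n‖ ^ 2 = (n : ℝ) ^ 2 := by
    rw [Int.norm_eq_abs, sq_abs]
  rw [h3] at h2
  rw [Real.norm_of_nonneg (Real.exp_pos _).le, neg_mul, Real.exp_neg, mul_one_div, le_div_iff₀ hn',
    inv_mul_le_iff₀ (Real.exp_pos _)]
  linarith

lemma summable_pi (g : ℤ → ℝ) (hg0 : ∀ n, 0 ≤ g n) (hg : Summable g) (d : ℕ) :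
    Summable fun k : Fin d → ℤ => ∏ i, g (k i) := by
  induction d with
  | zero => exact Summable.of_finite
  | succ d ih =>
    have h := hg.mul_of_nonneg ih hg0 (fun k => Finset.prod_nonneg fun i _ => hg0 _)
    rw [← (Fin.consEquiv fun _ => ℤ).summable_iff]
    refine h.congr fun x => ?_
    simp [Fin.consEquiv, Fin.prod_univ_succ]

lemma summable_multi {d : ℕ} (b s : ℝ) (hb : 0 < b) (hs : 1 ≤ s) :
    Summable fun k : Fin d → ℤ => Real.exp (-b * ‖k‖ ^ ((1 : ℝ) / s)) := by
  have hs0 : 0 < s := by linarith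
  have hb' : 0 < b / (d + 1) := by positivity
  refine Summable.of_nonneg_of_le (fun _ => (Real.exp_pos _).le) ?_
    (summable_pi _ (fun _ => (Real.exp_pos _).le) (summable_one (b / (d + 1)) s hb' hs) d)
  intro k
  rw [← Real.exp_sum]
  gcongr
  have h1 : ∀ i ∈ Finset.univ, -(b / (d + 1)) * ‖k‖ ^ ((1 : ℝ) / s) ≤
      -(b / (d + 1)) * ‖k i‖ ^ ((1 : ℝ) / s) := by
    intro i _
    have : ‖k i‖ ^ ((1 : ℝ) / s) ≤ ‖k‖ ^ ((1 : ℝ) / s) := by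
      gcongr
      exact norm_le_pi_norm k i
    nlinarith
  refine le_trans ?_ (Finset.sum_le_sum h1)
  have h0 : 0 ≤ ‖k‖ ^ ((1 : ℝ) / s) := by positivity
  have : (d : ℝ) * (b / (d + 1)) ≤ b := by
    rw [mul_div_assoc', div_le_iff₀ (by positivity)]; nlinarith
  simp only [Finset.sum_const, Finset.card_univ, Fintype.card_fin, nsmul_eq_mul]
  nlinarith

/-- the exponential -/
noncomputable def ex {d : ℕ} (k : Fin d → ℤ) (x : Fin d → ℝ) : ℂ :=
  Complex.exp (Complex.I * ∑ i, (k i : ℂ) * (x i : ℂ))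

lemma norm_ex {d : ℕ} (k : Fin d → ℤ) (x : Fin d → ℝ) : ‖ex k x‖ = 1 := by
  have : (Complex.I * ∑ i, (k i : ℂ) * (x i : ℂ)) =
      ((∑ i, (k i : ℝ) * x i : ℝ) : ℂ) * Complex.I := by
    push_cast; ring
  rw [ex, this, Complex.norm_exp_ofReal_mul_I]

/-- Fourier series -/
noncomputable def F {d : ℕ} (a : (Fin d → ℤ) → ℂ) (x : Fin d → ℝ) : ℂ :=
  ∑' k, a k * ex k x

/-- rapidly decaying -/
def Rapid {d : ℕ} (a : (Fin d → ℤ) → ℂ) : Prop :=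
  ∀ n : ℕ, Summable fun k => ‖k‖ ^ n * ‖a k‖

/-- derivative functional -/
noncomputable def L {d : ℕ} (k : Fin d → ℤ) : (Fin d → ℝ) →L[ℝ] ℂ :=
  ∑ i, (ContinuousLinearMap.proj (R := ℝ) (φ := fun _ : Fin d => ℝ) i).smulRight
    (Complex.I * (k i : ℂ))

lemma L_apply {d : ℕ} (k : Fin d → ℤ) (x : Fin d → ℝ) :
    L k x = Complex.I * ∑ i, (k i : ℂ) * (x i : ℂ) := by
  simp only [L, _root_.sum_apply, ContinuousLinearMap.smulRight_apply,
    ContinuousLinearMap.proj_apply, Complex.real_smul, Finset.mul_sum]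
  exact Finset.sum_congr rfl fun i _ => by ring

lemma norm_coord {d : ℕ} (k : Fin d → ℤ) (i : Fin d) : ‖Complex.I * (k i : ℂ)‖ ≤ ‖k‖ := by
  rw [norm_mul, Complex.norm_I, one_mul, Complex.norm_intCast, ← Int.norm_eq_abs]
  exact norm_le_pi_norm k i

lemma norm_L {d : ℕ} (k : Fin d → ℤ) : ‖L k‖ ≤ d * ‖k‖ := by
  refine ContinuousLinearMap.opNorm_le_bound _ (by positivity) fun x => ?_
  rw [L_apply, Finset.mul_sum]
  refine (norm_sum_le _ _).trans ?_
  have : ∀ i ∈ Finset.univ, ‖Complex.I * ((k i : ℂ) * (x i : ℂ))‖ ≤ ‖k‖ * ‖x‖ := by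
    intro i _
    rw [← mul_assoc, norm_mul]
    refine mul_le_mul (norm_coord k i) ?_ (norm_nonneg _) (norm_nonneg _)
    rw [Complex.norm_real]
    exact norm_le_pi_norm x i
  refine (Finset.sum_le_sum this).trans ?_
  simp [mul_assoc]

lemma hasFDerivAt_ex {d : ℕ} (k : Fin d → ℤ) (x : Fin d → ℝ) :
    HasFDerivAt (ex k) (ex k x • L k) x := by
  have h : ex k = fun x => Complex.exp (L k x) := by
    funext x; rw [L_apply]; rfl
  have := (L k).hasFDerivAt (x := x)
  have h2 := this.cexp
  rw [h]
  exact h2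

lemma Rapid.mul {d : ℕ} {a : (Fin d → ℤ) → ℂ} (ha : Rapid a) (i : Fin d) :
    Rapid fun k => a k * (Complex.I * (k i : ℂ)) := by
  intro n
  refine Summable.of_nonneg_of_le (fun _ => by positivity) ?_ (ha (n + 1))
  intro k
  rw [norm_mul, pow_succ]
  have := norm_coord k i
  calc ‖k‖ ^ n * (‖a k‖ * ‖Complex.I * (k i : ℂ)‖) ≤ ‖k‖ ^ n * (‖a k‖ * ‖k‖) := by gcongr
    _ = _ := by ring

lemma hasFDerivAt_F {d : ℕ} {a : (Fin d → ℤ) → ℂ} (ha : Rapid a) (x : Fin d → ℝ) :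
    HasFDerivAt (F a) (∑' k, a k • (ex k x • L k)) x := by
  refine hasFDerivAt_tsum (𝕜 := ℝ) (u := fun k => d * (‖k‖ ^ 1 * ‖a k‖)) ((ha 1).mul_left _)
    (f := fun k y => a k * ex k y) (f' := fun k x => a k • (ex k x • L k)) (x₀ := 0) ?_ ?_ ?_ x
  · intro k x
    exact (hasFDerivAt_ex k x).const_mul (a k)
  · intro k x
    rw [norm_smul, norm_smul, norm_ex, one_mul]
    have := norm_L k
    calc ‖a k‖ * ‖L k‖ ≤ ‖a k‖ * (d * ‖k‖) := by gcongr
      _ = _ := by ring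
  · refine Summable.of_norm ((ha 0).congr fun k => ?_)
    simp [norm_ex]

lemma summable_fderiv {d : ℕ} {a : (Fin d → ℤ) → ℂ} (ha : Rapid a) (x : Fin d → ℝ) :
    Summable fun k => a k • (ex k x • L k) := by
  refine Summable.of_norm_bounded (g := fun k => d * (‖k‖ ^ 1 * ‖a k‖)) ((ha 1).mul_left _) ?_
  intro k
  rw [norm_smul, norm_smul, norm_ex, one_mul]
  have := norm_L k
  calc ‖a k‖ * ‖L k‖ ≤ ‖a k‖ * (d * ‖k‖) := by gcongr
    _ = _ := by ring

lemma pderiv_F {d : ℕ} {a : (Fin d → ℤ) → ℂ} (ha : Rapid a) (i : Fin d) :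
    pderivDir i (F a) = F fun k => a k * (Complex.I * (k i : ℂ)) := by
  funext x
  rw [pderivDir, (hasFDerivAt_F ha x).fderiv]
  have hh := (ContinuousLinearMap.apply ℝ ℂ (Pi.single i 1 : Fin d → ℝ)).map_tsum
    (summable_fderiv ha x)
  simp only [ContinuousLinearMap.apply_apply] at hh
  rw [hh]
  refine tsum_congr fun k => ?_
  have : L k (Pi.single i 1) = Complex.I * (k i : ℂ) := by
    rw [L_apply]
    congr 1
    rw [Finset.sum_eq_single i]
    · simp
    · intro j _ hj; simp [hj]
    · simp
  simp only [ContinuousLinearMap.smul_apply, this, smul_eq_mul]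
  ring

lemma contDiff_F {d : ℕ} (n : ℕ) : ∀ {a : (Fin d → ℤ) → ℂ}, Rapid a → ContDiff ℝ n (F a) := by
  induction n with
  | zero =>
    intro a ha
    have : Differentiable ℝ (F a) := fun x => (hasFDerivAt_F ha x).differentiableAt
    exact contDiff_zero.2 this.continuous
  | succ n ih =>
    intro a ha
    have hd : Differentiable ℝ (F a) := fun x => (hasFDerivAt_F ha x).differentiableAt
    have : fderiv ℝ (F a) = fun x => ∑ i,
        (ContinuousLinearMap.smulRightL ℝ (Fin d → ℝ) ℂ
          (ContinuousLinearMap.proj (R := ℝ) (φ := fun _ : Fin d => ℝ) i))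
          (F (fun k => a k * (Complex.I * (k i : ℂ))) x) := by
      funext x
      ext v
      simp only [_root_.sum_apply, ContinuousLinearMap.smulRightL_apply_apply,
        ContinuousLinearMap.smulRight_apply, ContinuousLinearMap.proj_apply]
      conv_lhs => rw [pi_eq_sum_univ' v]
      rw [map_sum]
      refine Finset.sum_congr rfl fun i _ => ?_
      rw [map_smul, ← pderiv_F ha i]
      rfl
    push_cast
    refine contDiff_succ_iff_fderiv.2 ⟨hd, by simp, ?_⟩
    rw [this]
    refine ContDiff.sum fun i _ => ?_
    exact (ContinuousLinearMap.contDiff _).comp (ih (ha.mul i))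

lemma iter_F {d : ℕ} (i : Fin d) (n : ℕ) : ∀ {a : (Fin d → ℤ) → ℂ}, Rapid a →
    Rapid (fun k => a k * (Complex.I * (k i : ℂ)) ^ n) ∧
    (pderivDir i)^[n] (F a) = F fun k => a k * (Complex.I * (k i : ℂ)) ^ n := by
  induction n with
  | zero => intro a ha; simpa using ha
  | succ n ih =>
    intro a ha
    have h := ih (ha.mul i)
    have e : (fun k : Fin d → ℤ => a k * (Complex.I * (k i : ℂ)) * (Complex.I * (k i : ℂ)) ^ n) =
      fun k => a k * (Complex.I * (k i : ℂ)) ^ (n + 1) := by funext k; ring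
    rw [e] at h
    refine ⟨h.1, ?_⟩
    rw [Function.iterate_succ_apply, pderiv_F ha i, h.2]

lemma list_F {d : ℕ} (α : Fin d → ℕ) (l : List (Fin d)) {a : (Fin d → ℤ) → ℂ} (ha : Rapid a) :
    Rapid (fun k => a k * (l.map fun i => (Complex.I * (k i : ℂ)) ^ α i).prod) ∧
    ((l.map fun i => (pderivDir i)^[α i]).foldr (· ∘ ·) id) (F a) =
      F fun k => a k * (l.map fun i => (Complex.I * (k i : ℂ)) ^ α i).prod := by
  induction l with
  | nil => simpa using ha
  | cons i l ih =>
    have h := iter_F i (α i) ih.1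
    have e : (fun k : Fin d → ℤ => a k * (l.map fun i => (Complex.I * (k i : ℂ)) ^ α i).prod *
        (Complex.I * (k i : ℂ)) ^ α i) =
        fun k => a k * ((i :: l).map fun i => (Complex.I * (k i : ℂ)) ^ α i).prod := by
      funext k; simp only [List.map_cons, List.prod_cons]; ring
    rw [e] at h
    refine ⟨h.1, ?_⟩
    rw [List.map_cons, List.foldr_cons, Function.comp_apply, ih.2, h.2]

lemma multi_F {d : ℕ} (α : Fin d → ℕ) {a : (Fin d → ℤ) → ℂ} (ha : Rapid a) :
    multiDeriv α (F a) = F fun k => a k * ∏ i, (Complex.I * (k i : ℂ)) ^ α i := by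
  have h := (list_F α (List.finRange d) ha).2
  rw [multiDeriv, List.ofFn_eq_map, h]
  simp only [← List.ofFn_eq_map, List.prod_ofFn]

end GevreyAux

open GevreyAux in
/-- sub-exponential decay of the Fourier coefficients implies that the
function is smooth and s-Gevrey. -/
theorem fourier_decay_gevrey {d : ℕ} (f : (Fin d → ℝ) → ℂ) (a : (Fin d → ℤ) → ℂ)
    (C s : ℝ) (hC : 0 < C) (hs : 1 ≤ s)
    (hrep : ∀ x, f x = ∑' k : Fin d → ℤ, a k * Complex.exp (Complex.I * ∑ i, (k i : ℂ) * (x i : ℂ)))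
    (hcoef : ∀ k : Fin d → ℤ, ‖a k‖ ≤ Real.exp (-(C ^ (-1 / s)) * ‖k‖ ^ ((1 : ℝ) / s))) :
    ContDiff ℝ (⊤ : ℕ∞) f ∧
    ∃ C' > (0 : ℝ), ∀ (α : Fin d → ℕ) (x : Fin d → ℝ),
      ‖multiDeriv α f x‖ ≤ C' ^ ((∑ i, α i) + 1) * ((∏ i, Nat.factorial (α i) : ℕ) : ℝ) ^ s := by
  have hf : f = F a := funext hrep
  have hs0 : 0 < s := by linarith
  obtain ⟨c, hc⟩ : ∃ c : ℝ, c = C ^ (-1 / s) := ⟨_, rfl⟩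
  have hc0 : 0 < c := hc ▸ Real.rpow_pos_of_pos hC _
  rw [← hc] at hcoef
  have hrapid : Rapid a := by
    intro n
    have h2 : 0 < c / 2 := by positivity
    refine Summable.of_nonneg_of_le (fun _ => by positivity) ?_
      ((summable_multi (c / 2) s h2 hs).mul_left (((s / (c / 2)) ^ s) ^ n * (n.factorial : ℝ) ^ s))
    intro k
    have h := pow_le_gevrey (c / 2) s ‖k‖ h2 hs (norm_nonneg _) n
    refine (mul_le_mul h (hcoef k) (norm_nonneg _) (by positivity)).trans (le_of_eq ?_)
    rw [mul_assoc, ← Real.exp_add]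
    congr 2
    ring
  refine ⟨?_, ?_⟩
  · rw [hf]
    exact contDiff_infty.2 fun n => contDiff_F n hrapid
  obtain ⟨b, hb⟩ : ∃ b : ℝ, b = c / (d + 1) := ⟨_, rfl⟩
  have hb0 : 0 < b := by rw [hb]; positivity
  have hcb : c = d * b + b := by rw [hb]; field_simp
  obtain ⟨B, hB⟩ : ∃ B : ℝ, B = (s / b) ^ s := ⟨_, rfl⟩
  have hB0 : 0 < B := by rw [hB]; positivity
  have hS := summable_multi (d := d) b s hb0 hs
  obtain ⟨S, hSdef⟩ : ∃ S : ℝ, S = ∑' k : Fin d → ℤ, Real.exp (-b * ‖k‖ ^ ((1 : ℝ) / s)) :=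
    ⟨_, rfl⟩
  have hS0 : 0 ≤ S := by rw [hSdef]; exact tsum_nonneg fun _ => (Real.exp_pos _).le
  refine ⟨max B S, lt_max_of_lt_left hB0, fun α x => ?_⟩
  rw [hf, multi_F α hrapid, F]
  have key : ∀ k : Fin d → ℤ, ‖(a k * ∏ i, (Complex.I * (k i : ℂ)) ^ α i) * ex k x‖ ≤
      (B ^ (∑ i, α i) * ((∏ i, Nat.factorial (α i) : ℕ) : ℝ) ^ s) *
        Real.exp (-b * ‖k‖ ^ ((1 : ℝ) / s)) := by
    intro k
    rw [norm_mul, norm_mul, norm_ex, mul_one, norm_prod]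
    have h1 : ∏ i, ‖(Complex.I * (k i : ℂ)) ^ α i‖ ≤
        ∏ i, (B ^ α i * ((α i).factorial : ℝ) ^ s * Real.exp (b * ‖k‖ ^ ((1 : ℝ) / s))) := by
      refine Finset.prod_le_prod (fun _ _ => norm_nonneg _) fun i _ => ?_
      rw [norm_pow, hB]
      exact (pow_le_pow_left₀ (norm_nonneg _) (norm_coord k i) _).trans
        (pow_le_gevrey b s ‖k‖ hb0 hs (norm_nonneg _) _)
    refine (mul_le_mul (hcoef k) h1 (Finset.prod_nonneg fun _ _ => norm_nonneg _)
      (Real.exp_pos _).le).trans (le_of_eq ?_)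
    rw [Finset.prod_mul_distrib, Finset.prod_mul_distrib, Finset.prod_pow_eq_pow_sum,
      Real.finset_prod_rpow _ _ (fun _ _ => by positivity), Finset.prod_const, ← Real.exp_nat_mul,
      mul_comm, mul_assoc, ← Real.exp_add]
    push_cast
    congr 2
    rw [Finset.card_univ, Fintype.card_fin, hcb]
    ring
  refine (tsum_of_norm_bounded (hS.hasSum.mul_left _) key).trans ?_
  rw [← hSdef, pow_succ, mul_right_comm]
  have h1 := le_max_left B S
  have h2 := le_max_right B S
  gcongr
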